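/- Let k be an algebraically closed field of characteristic zero, q a finite-dimensional abelian Lie algebra over k, and V a finite-dimensional q-module such that V is spanned by simultaneous eigenvectors of q, i.e., V = ⊕_{λ ∈ q*} V_λ where V_λ := {x ∈ V : s·x = λ(s)x for all s ∈ q} (this is the Lie algebra analogue of a representation of an algebraic torus). Then V has good index behaviour: for every v ∈ V, min_{w ∈ V} dim {s ∈ q : s·v = 0 and s·w ∈ q·v} = min_{x ∈ V} dim q_x, i.e., ind(q_v, (V/q·v)*) = ind(q, V*). -/

import Mathlib

/-!
Any module over an abelian Lie algebra that is spanned by simultaneous eigenvectors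
(the Lie-algebra analogue of a representation of an algebraic torus) has good index
behaviour.
-/

open Module

namespace Stmt

variable (k : Type*) [Field k]
variable (L : Type*) [LieRing L] [LieAlgebra k L]
variable (M : Type*) [AddCommGroup M] [Module k M] [LieRingModule L M] [LieModule k L M]

/-- The linear map `s ↦ s·v = ⁅s, v⁆`. -/
def actAt (v : M) : L →ₗ[k] M where
  toFun s := ⁅s, v⁆
  map_add' a b := add_lie a b v
  map_smul' c a := smul_lie c a v

/-- The tangent space `q·v = {s·v : s ∈ q}` of the orbit of `v`. -/
def orbit (v : M) : Submodule k M := LinearMap.range (actAt k L M v)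

/-- The stabiliser subalgebra `q_v = {s ∈ q : s·v = 0}`. -/
def stab (v : M) : LieSubalgebra k L where
  carrier := {s | ⁅s, v⁆ = 0}
  add_mem' := by intro a b ha hb; simp only [Set.mem_setOf_eq, add_lie] at *; rw [ha, hb, add_zero]
  zero_mem' := by simp
  smul_mem' := by intro c a ha; simp only [Set.mem_setOf_eq, smul_lie] at *; rw [ha, smul_zero]
  lie_mem' := by
    intro a b ha hb; simp only [Set.mem_setOf_eq, lie_lie] at *; rw [ha, hb]; simp

/-- The index of the Lie module `M`:
`ind(q, M) = dim M − max_{ξ ∈ M*} dim q·ξ`, where the coadjoint action on the dual module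
is `(s·ξ)(m) = −ξ(s·m)`. -/
noncomputable def lieIndex : ℕ :=
  finrank k M - ⨆ ξ : Module.Dual k M, finrank k (orbit k L (Module.Dual k M) ξ)

/-- `{s ∈ q : s·v = 0 and s·w ∈ q·v}`. -/
def relStab (v w : M) : Submodule k L where
  carrier := {s | ⁅s, v⁆ = 0 ∧ ⁅s, w⁆ ∈ orbit k L M v}
  add_mem' := by
    rintro a b ⟨ha1, ha2⟩ ⟨hb1, hb2⟩
    exact ⟨by rw [add_lie, ha1, hb1, add_zero], by rw [add_lie]; exact add_mem ha2 hb2⟩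
  zero_mem' := by constructor <;> simp
  smul_mem' := by
    rintro c a ⟨ha1, ha2⟩
    exact ⟨by rw [smul_lie, ha1, smul_zero], by rw [smul_lie]; exact Submodule.smul_mem _ c ha2⟩

/-- The orbit `q·v` as a Lie submodule over the stabiliser `q_v`. -/
def orbitLS (v : M) : LieSubmodule k ↥(stab k L M v) M :=
  { orbit k L M v with
    lie_mem := by
      rintro x m ⟨t, rfl⟩
      show ⁅(x : L), _⁆ ∈ orbit k L M v
      have hx : ⁅(x : L), v⁆ = 0 := x.2
      have : ⁅(x : L), (actAt k L M v) t⁆ = actAt k L M v ⁅(x : L), t⁆ := by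
        show ⁅(x : L), ⁅t, v⁆⁆ = ⁅⁅(x : L), t⁆, v⁆
        rw [lie_lie, hx, lie_zero, sub_zero]
      rw [this]
      exact ⟨_, rfl⟩ }

/-!
Rank-nullity gives `ind(q, M*) = dim M - dim q + min_x dim q_x`; applied to `q_v` acting on
`M/q·v` it gives `ind(q_v, (M/q·v)*) = dim M - dim q + min_w dim {s ∈ q_v : s·w ∈ q·v}`. The first
minimum is the case `v = 0` of the second, so it is enough that the second does not depend on `v`.
Let `w` be the sum of a basis of eigenvectors. If `s·v = 0` and `s·w = t·v`, comparing coordinates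
shows that the square of every weight vanishes at `s`, so `s` acts by zero on `M`; hence the
minimum is the dimension of the kernel of the action, whatever `v` is.
-/

section

variable {k L M}

variable (k L) in
theorem finrank_orbit_add_finrank_stab [FiniteDimensional k L] (v : M) :
    finrank k (orbit k L M v) + finrank k (stab k L M v) = finrank k L :=
  LinearMap.finrank_range_add_finrank_ker (actAt k L M v)

theorem mem_stab_mk_iff (v w : M) (t : stab k L M v) :
    t ∈ stab k (stab k L M v) (M ⧸ orbitLS k L M v) (LieSubmodule.Quotient.mk w) ↔
      (t : L) ∈ relStab k L M v w :=
  LieSubmodule.Quotient.mk_eq_zero'.trans (and_iff_right t.2).symm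

theorem finrank_stab_mk (v w : M) :
    finrank k (stab k (stab k L M v) (M ⧸ orbitLS k L M v) (LieSubmodule.Quotient.mk w)) =
      finrank k (relStab k L M v w) := by
  have hmap : (stab k (stab k L M v) (M ⧸ orbitLS k L M v)
        (LieSubmodule.Quotient.mk w)).toSubmodule.map (stab k L M v).toSubmodule.subtype =
      relStab k L M v w := by
    ext s
    constructor
    · rintro ⟨t, ht, rfl⟩
      exact (mem_stab_mk_iff v w t).1 ht
    · exact fun hs ↦ ⟨⟨s, hs.1⟩, (mem_stab_mk_iff v w _).2 hs, rfl⟩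
  rw [← hmap]
  exact (Submodule.finrank_map_subtype_eq _ _).symm

theorem iInf_finrank_stab_quotient (v : M) :
    ⨅ y : M ⧸ orbitLS k L M v, finrank k (stab k (stab k L M v) (M ⧸ orbitLS k L M v) y) =
      ⨅ w : M, finrank k (relStab k L M v w) :=
  ((LieSubmodule.Quotient.surjective_mk' (orbitLS k L M v)).iInf_comp _).symm.trans
    (iInf_congr (finrank_stab_mk v))

theorem relStab_zero (x : M) : relStab k L M 0 x = (stab k L M x).toSubmodule := by
  ext s
  refine ⟨?_, fun hs ↦ ⟨lie_zero s, 0, ?_⟩⟩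
  · rintro ⟨-, t, ht⟩
    exact ht.symm.trans (lie_zero t)
  · exact (lie_zero 0).trans (Eq.symm hs)

theorem ker_le_relStab (v w : M) : (LieModule.ker k L M).toSubmodule ≤ relStab k L M v w := by
  intro s hs
  have hs' : ∀ x : M, ⁅s, x⁆ = 0 := (LieModule.mem_ker k L M s).1 hs
  exact ⟨hs' v, by rw [hs' w]; exact zero_mem _⟩

theorem orbit_dual_eval (m : M) :
    orbit k L (Dual k (Dual k M)) (Dual.eval k M m) = (orbit k L M m).map (Dual.eval k M) := by
  rw [orbit, orbit, ← LinearMap.range_comp]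
  congr 1
  ext s ξ
  simp [actAt]

variable (k L M) in
theorem lieIndex_dual [FiniteDimensional k M] :
    lieIndex k L (Dual k M) = finrank k M - ⨆ m : M, finrank k (orbit k L M m) := by
  have hfinrank (m : M) : finrank k (orbit k L (Dual k (Dual k M)) (Dual.eval k M m)) =
      finrank k (orbit k L M m) := by
    rw [orbit_dual_eval]
    exact LinearEquiv.finrank_map_eq (evalEquiv k M) _
  rw [lieIndex, Subspace.dual_finrank_eq, ← (evalEquiv k M).surjective.iSup_comp]
  exact congrArg _ (iSup_congr hfinrank)

variable (k L M) in
theorem iSup_finrank_orbit_add_iInf_finrank_stab [FiniteDimensional k L] :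
    (⨆ x : M, finrank k (orbit k L M x)) + ⨅ x : M, finrank k (stab k L M x) = finrank k L := by
  obtain ⟨w, hw⟩ := ciInf_mem fun x : M ↦ finrank k (stab k L M x)
  have hmax : IsGreatest (Set.range fun x : M ↦ finrank k (orbit k L M x))
      (finrank k (orbit k L M w)) := by
    refine ⟨⟨w, rfl⟩, ?_⟩
    rintro _ ⟨x, rfl⟩
    have hmin : finrank k (stab k L M w) ≤ finrank k (stab k L M x) :=
      hw.le.trans (ciInf_le' _ x)
    linarith [finrank_orbit_add_finrank_stab k L w, finrank_orbit_add_finrank_stab k L x]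
  rw [iSup, hmax.csSup_eq, ← hw]
  exact finrank_orbit_add_finrank_stab k L w

variable (k L M) in
theorem lieIndex_dual_add_finrank [FiniteDimensional k L] [FiniteDimensional k M] :
    lieIndex k L (Dual k M) + finrank k L =
      finrank k M + ⨅ x : M, finrank k (stab k L M x) := by
  have hle : ⨆ x : M, finrank k (orbit k L M x) ≤ finrank k M :=
    ciSup_le fun x ↦ Submodule.finrank_le _
  rw [lieIndex_dual, ← iSup_finrank_orbit_add_iInf_finrank_stab k L M]
  omega

theorem lieIndex_dual_quotient_add_finrank [FiniteDimensional k L] [FiniteDimensional k M]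
    (v : M) :
    lieIndex k (stab k L M v) (Dual k (M ⧸ orbitLS k L M v)) + finrank k L =
      finrank k M + ⨅ w : M, finrank k (relStab k L M v w) := by
  have : FiniteDimensional k (M ⧸ orbitLS k L M v) :=
    inferInstanceAs (FiniteDimensional k (M ⧸ orbit k L M v))
  have hindex := lieIndex_dual_add_finrank k (stab k L M v) (M ⧸ orbitLS k L M v)
  have hquot : finrank k (M ⧸ orbitLS k L M v) + finrank k (orbit k L M v) = finrank k M :=
    Submodule.finrank_quotient_add_finrank (orbit k L M v)
  have horbit := finrank_orbit_add_finrank_stab k L v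
  rw [iInf_finrank_stab_quotient] at hindex
  omega

theorem iInf_finrank_relStab_eq_finrank_ker [FiniteDimensional k L] {v w : M}
    (hw : relStab k L M v w ≤ (LieModule.ker k L M).toSubmodule) :
    ⨅ x : M, finrank k (relStab k L M v x) = finrank k (LieModule.ker k L M) :=
  le_antisymm ((ciInf_le' _ w).trans (Submodule.finrank_mono hw))
    (le_ciInf fun x ↦ Submodule.finrank_mono (ker_le_relStab v x))

omit [LieModule k L M] in
theorem exists_basis_lie_eq_smul
    (hspan : Submodule.span k {x : M | ∃ χ : Dual k L, ∀ s : L, ⁅s, x⁆ = χ s • x} = ⊤) :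
    ∃ (ι : Set M) (b : Basis ι k M) (χ : ι → Dual k L), ∀ i s, ⁅s, b i⁆ = χ i s • b i := by
  have hweight (i) := Basis.ofSpan_subset hspan.ge ⟨i, rfl⟩
  choose χ hχ using hweight
  exact ⟨_, Basis.ofSpan hspan.ge, χ, hχ⟩

section WeightBasis

variable {ι : Type*} {b : Basis ι k M} {χ : ι → Dual k L}

theorem repr_lie (hb : ∀ i s, ⁅s, b i⁆ = χ i s • b i) (s : L) (x : M) (i : ι) :
    b.repr ⁅s, x⁆ i = χ i s * b.repr x i := by
  have hcoord : b.coord i ∘ₗ LieModule.toEnd k L M s = χ i s • b.coord i := by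
    refine b.ext fun j ↦ ?_
    obtain rfl | hij := eq_or_ne j i <;> simp [*]
  exact LinearMap.congr_fun hcoord x

theorem mem_ker_of_weight_eq_zero (hb : ∀ i s, ⁅s, b i⁆ = χ i s • b i) {s : L}
    (hs : ∀ i, χ i s = 0) : s ∈ LieModule.ker k L M :=
  (LieModule.mem_ker k L M s).2 fun x ↦ b.ext_elem fun i ↦ by simp [repr_lie hb, hs]

theorem relStab_le_ker_of_repr_ne_zero (hb : ∀ i s, ⁅s, b i⁆ = χ i s • b i) {w : M}
    (hw : ∀ i, b.repr w i ≠ 0) (v : M) :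
    relStab k L M v w ≤ (LieModule.ker k L M).toSubmodule := by
  rintro s ⟨hsv, t, ht⟩
  refine mem_ker_of_weight_eq_zero hb fun i ↦ ?_
  have hv : χ i s * b.repr v i = 0 := by rw [← repr_lie hb, hsv]; simp
  have htv : χ i t * b.repr v i = χ i s * b.repr w i := by
    rw [← repr_lie hb, ← repr_lie hb]
    exact congrArg (b.repr · i) ht
  have hsq : χ i s * χ i s * b.repr w i = 0 := by
    linear_combination χ i t * hv - χ i s * htv
  exact mul_self_eq_zero.1 ((mul_eq_zero.1 hsq).resolve_right (hw i))

end WeightBasis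

theorem exists_forall_relStab_le_ker [FiniteDimensional k M]
    (hspan : Submodule.span k {x : M | ∃ χ : Dual k L, ∀ s : L, ⁅s, x⁆ = χ s • x} = ⊤) :
    ∃ w : M, ∀ v : M, relStab k L M v w ≤ (LieModule.ker k L M).toSubmodule := by
  obtain ⟨ι, b, χ, hb⟩ := exists_basis_lie_eq_smul hspan
  have := FiniteDimensional.fintypeBasisIndex b
  exact ⟨b.equivFun.symm 1, relStab_le_ker_of_repr_ne_zero hb fun i ↦ by simp⟩

end

theorem torus_gib_general [FiniteDimensional k L] [FiniteDimensional k M]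
    (hspan : Submodule.span k
      {x : M | ∃ χ : Module.Dual k L, ∀ s : L, ⁅s, x⁆ = χ s • x} = ⊤) (v : M) :
    ((⨅ w : M, finrank k (relStab k L M v w)) = ⨅ x : M, finrank k (stab k L M x)) ∧
      lieIndex k (stab k L M v) (Module.Dual k (M ⧸ orbitLS k L M v)) =
        lieIndex k L (Module.Dual k M) := by
  obtain ⟨w, hw⟩ := exists_forall_relStab_le_ker hspan
  have hmin : ⨅ x : M, finrank k (relStab k L M v x) = ⨅ x : M, finrank k (stab k L M x) :=
    calc ⨅ x : M, finrank k (relStab k L M v x)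
      _ = finrank k (LieModule.ker k L M) := iInf_finrank_relStab_eq_finrank_ker (hw v)
      _ = ⨅ x : M, finrank k (relStab k L M 0 x) :=
        (iInf_finrank_relStab_eq_finrank_ker (hw 0)).symm
      _ = ⨅ x : M, finrank k (stab k L M x) := iInf_congr fun x ↦ by rw [relStab_zero]; rfl
  refine ⟨hmin, Nat.add_right_cancel (m := finrank k L) ?_⟩
  rw [lieIndex_dual_quotient_add_finrank, lieIndex_dual_add_finrank, hmin]

/-- A representation of a "torus" has good index behaviour. -/
theorem torus_gib [IsAlgClosed k] [CharZero k]
    [FiniteDimensional k L] [FiniteDimensional k M] [IsLieAbelian L]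
    (hspan : Submodule.span k
      {x : M | ∃ χ : Module.Dual k L, ∀ s : L, ⁅s, x⁆ = χ s • x} = ⊤) :
    ∀ v : M,
      ((⨅ w : M, finrank k (relStab k L M v w)) = ⨅ x : M, finrank k (stab k L M x)) ∧
      lieIndex k ↥(stab k L M v) (Module.Dual k (M ⧸ orbitLS k L M v)) =
        lieIndex k L (Module.Dual k M) :=
  torus_gib_general k L M hspan

end Stmt
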